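/- Suppose M and N are maps and the connected sum M⊕N exists with respect to flags f_M and f_N. Suppose furthermore that for each I ∉ T(M) there exists an I-inconsistent cycle of M none of whose visited flags belongs to the face F_M, and likewise for N (with F_N). Then T(M⊕N) = T(M) ∩ T(N). -/

import Mathlib

/-- A (combinatorial) map: a nonempty set of flags `Ω` together with three
permutations `r 0, r 1, r 2` which are fixed-point-free involutions, such that
`r 0` and `r 2` commute with fixed-point-free product, and such that the
connection group `⟨r 0, r 1, r 2⟩` acts transitively on `Ω`. -/
structure CMap (Ω : Type) where
  r : Fin 3 → Equiv.Perm Ω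
  nonempty : Nonempty Ω
  invol : ∀ (i : Fin 3) (f : Ω), r i (r i f) = f
  fpf : ∀ (i : Fin 3) (f : Ω), r i f ≠ f
  comm02 : ∀ f : Ω, r 0 (r 2 f) = r 2 (r 0 f)
  fpf02 : ∀ f : Ω, r 0 (r 2 f) ≠ f
  flag_transitive : ∀ f g : Ω,
    ∃ w ∈ Subgroup.closure ({r 0, r 1, r 2} : Set (Equiv.Perm Ω)), w f = g

/-- `a` is an `I`-coloring with respect to the connections `r`. -/
def IsColoringOn {Ω : Type} (r : Fin 3 → Ω → Ω) (I : Set (Fin 3)) (a : Ω → ZMod 2) : Prop :=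
  ∀ (f : Ω) (j : Fin 3), (j ∈ I → a (r j f) = a f + 1) ∧ (j ∉ I → a (r j f) = a f)

/-- There exists an `I`-coloring with respect to the connections `r`. -/
def ColorableOn {Ω : Type} (r : Fin 3 → Ω → Ω) (I : Set (Fin 3)) : Prop :=
  ∃ a : Ω → ZMod 2, IsColoringOn r I a

/-- `a` is an `I`-coloring of the map `M`. -/
def CMap.IsColoring {Ω : Type} (M : CMap Ω) (I : Set (Fin 3)) (a : Ω → ZMod 2) : Prop :=
  IsColoringOn (fun j f => M.r j f) I a

/-- The map `M` admits an `I`-coloring. -/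
def CMap.Colorable {Ω : Type} (M : CMap Ω) (I : Set (Fin 3)) : Prop :=
  ∃ a : Ω → ZMod 2, M.IsColoring I a

/-- `T M` is the collection of subsets `I ⊆ {0,1,2}` for which `M` is `I`-colorable. -/
def CMap.T {Ω : Type} (M : CMap Ω) : Set (Set (Fin 3)) :=
  {I | M.Colorable I}

/-- Apply the word `W` (read left to right) to the flag `f`. -/
def CMap.applyWord {Ω : Type} (M : CMap Ω) (W : List (Fin 3)) (f : Ω) : Ω :=
  W.foldl (fun g i => M.r i g) f

/-- `(f, W)` is a cycle of `M`. -/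
def CMap.IsCycle {Ω : Type} (M : CMap Ω) (f : Ω) (W : List (Fin 3)) : Prop :=
  M.applyWord W f = f

open Classical in
/-- A word `W` is `I`-consistent when the number of its entries lying in `I` is even. -/
def Consistent (I : Set (Fin 3)) (W : List (Fin 3)) : Prop :=
  Even (W.countP fun i => decide (i ∈ I))

/-- The face of `M` containing the flag `f`: the orbit of `f` under `⟨r 0, r 1⟩`. -/
def CMap.faceOf {Ω : Type} (M : CMap Ω) (f : Ω) : Set Ω :=
  {g | ∃ w ∈ Subgroup.closure ({M.r 0, M.r 1} : Set (Equiv.Perm Ω)), w f = g}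

/-- `g ↦ g·r₀r₁`, so `(M.faceStep)^[j] f = f·(r₀r₁)ʲ`. -/
def CMap.faceStep {Ω : Type} (M : CMap Ω) (g : Ω) : Ω :=
  M.r 1 (M.r 0 g)

/-- The flag set `(Ω ∖ F_M) ∪ (Ω' ∖ F_N)` of the connected sum. -/
def connSumFlags {Ω Ω' : Type} (M : CMap Ω) (N : CMap Ω') (fM : Ω) (fN : Ω') : Set (Ω ⊕ Ω') :=
  {x | Sum.elim (fun g => g ∉ M.faceOf fM) (fun g => g ∉ N.faceOf fN) x}

/-- The set of flags visited by the cycle `(f, W)`. -/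
def CMap.visits {Ω : Type} (M : CMap Ω) (f : Ω) (W : List (Fin 3)) : Set Ω :=
  {g | ∃ W' : List (Fin 3), W' <+: W ∧ M.applyWord W' f = g}

open Classical in
/-- The increment of an `I`-coloring along the connection `j`. -/
noncomputable def colInc (I : Set (Fin 3)) (j : Fin 3) : ZMod 2 := if j ∈ I then 1 else 0

theorem isColoring_iff_colInc {Ω : Type} (M : CMap Ω) (I : Set (Fin 3)) (a : Ω → ZMod 2) :
    M.IsColoring I a ↔ ∀ f j, a (M.r j f) = a f + colInc I j := by
  unfold CMap.IsColoring IsColoringOn colInc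
  refine forall_congr' fun f => forall_congr' fun j => ?_
  by_cases h : j ∈ I <;> simp [h]

theorem face_r0 {Ω : Type} (M : CMap Ω) {f g : Ω} (hg : g ∈ M.faceOf f) :
    M.r 0 g ∈ M.faceOf f := by
  obtain ⟨w, hw, rfl⟩ := hg
  exact ⟨M.r 0 * w, mul_mem (Subgroup.subset_closure (by simp)) hw, rfl⟩

theorem face_r1 {Ω : Type} (M : CMap Ω) {f g : Ω} (hg : g ∈ M.faceOf f) :
    M.r 1 g ∈ M.faceOf f := by
  obtain ⟨w, hw, rfl⟩ := hg
  exact ⟨M.r 1 * w, mul_mem (Subgroup.subset_closure (by simp)) hw, rfl⟩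

theorem face_self {Ω : Type} (M : CMap Ω) (f : Ω) : f ∈ M.faceOf f :=
  ⟨1, one_mem _, rfl⟩

theorem face_step_iter {Ω : Type} (M : CMap Ω) {f g : Ω} (hg : g ∈ M.faceOf f) (j : ℕ) :
    (M.faceStep)^[j] g ∈ M.faceOf f := by
  induction j with
  | zero => exact hg
  | succ j ih =>
    rw [Function.iterate_succ_apply']
    exact face_r1 M (face_r0 M ih)

theorem faceStep_injective {Ω : Type} (M : CMap Ω) : Function.Injective M.faceStep := by
  intro x y h
  exact (M.r 0).injective ((M.r 1).injective h)

/-- On a finite face, every flag lies on the forward orbit of its successor. -/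
theorem face_pred {Ω : Type} (M : CMap Ω) {f u : Ω} (hfin : (M.faceOf f).Finite)
    (hu : u ∈ M.faceOf f) : ∃ n : ℕ, u = (M.faceStep)^[n] (M.faceStep u) := by
  obtain ⟨m, n, hmn, h⟩ := hfin.exists_lt_map_eq_of_forall_mem
    (f := fun n : ℕ => (M.faceStep)^[n] u) (fun n => face_step_iter M hu n)
  obtain ⟨k, rfl⟩ := Nat.exists_eq_add_of_lt hmn
  refine ⟨k, (faceStep_injective M).iterate m ?_⟩
  have h' : (M.faceStep)^[m] u = (M.faceStep)^[m + k + 1] u := h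
  rw [h', Nat.add_assoc, Function.iterate_add_apply, Function.iterate_succ_apply]

theorem face_form {Ω : Type} (M : CMap Ω) {f : Ω} (hfin : (M.faceOf f).Finite) :
    ∀ g ∈ M.faceOf f, ∃ j : ℕ, g = (M.faceStep)^[j] f ∨ g = (M.faceStep)^[j] (M.r 1 f) := by
  set S : Set Ω := {g | ∃ j : ℕ, g = (M.faceStep)^[j] f ∨ g = (M.faceStep)^[j] (M.r 1 f)} with hS
  have hf := face_self M f
  have hf1 := face_r1 M hf
  have hiter : ∀ (n : ℕ) (g : Ω), g ∈ S → (M.faceStep)^[n] g ∈ S := by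
    rintro n g ⟨j, rfl | rfl⟩
    · exact ⟨n + j, Or.inl (Function.iterate_add_apply _ _ _ _).symm⟩
    · exact ⟨n + j, Or.inr (Function.iterate_add_apply _ _ _ _).symm⟩
  have hpred : ∀ u ∈ M.faceOf f, M.faceStep u ∈ S → u ∈ S := by
    intro u hu h
    obtain ⟨n, hn⟩ := face_pred M hfin hu
    rw [hn]
    exact hiter n _ h
  have hstep : ∀ u, M.faceStep (M.r 1 (M.faceStep u)) = M.r 1 u := by
    intro u
    simp only [CMap.faceStep, M.invol]
  have hr1' : ∀ u ∈ M.faceOf f, M.r 1 u ∈ S → ∀ j : ℕ, M.r 1 ((M.faceStep)^[j] u) ∈ S := by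
    intro u hu h j
    induction j with
    | zero => exact h
    | succ j ih =>
      apply hpred _ (face_r1 M (face_step_iter M hu _))
      rw [Function.iterate_succ_apply', hstep]
      exact ih
  have hr1 : ∀ g ∈ S, M.r 1 g ∈ S := by
    rintro g ⟨j, rfl | rfl⟩
    · exact hr1' f hf ⟨0, Or.inr rfl⟩ j
    · exact hr1' _ hf1 ⟨0, Or.inl (M.invol 1 f)⟩ j
  have hr0 : ∀ g ∈ S, M.r 0 g ∈ S := by
    intro g hg
    have h := hr1 _ (hiter 1 g hg)
    simpa only [Function.iterate_one, CMap.faceStep, M.invol] using h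
  have hinv : ∀ i, (M.r i)⁻¹ = M.r i := by
    intro i
    rw [inv_eq_iff_mul_eq_one]
    ext x
    exact M.invol i x
  have key : ∀ w ∈ Subgroup.closure ({M.r 0, M.r 1} : Set (Equiv.Perm Ω)),
      ∀ g ∈ S, w g ∈ S := by
    intro w hw
    induction hw using Subgroup.closure_induction'' with
    | mem x hx =>
      rcases hx with rfl | rfl
      · exact hr0
      · exact hr1
    | inv_mem x hx =>
      rcases hx with rfl | rfl
      · rw [hinv]; exact hr0
      · rw [hinv]; exact hr1
    | one => exact fun g hg => hg
    | mul x y _ _ hx hy => exact fun g hg => hx _ (hy g hg)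
  rintro g ⟨w, hw, rfl⟩
  exact key w hw f ⟨0, Or.inl rfl⟩

theorem color_step_iter {Ω : Type} (M : CMap Ω) {I : Set (Fin 3)} {a : Ω → ZMod 2}
    (ha : ∀ f j, a (M.r j f) = a f + colInc I j) (f : Ω) (j : ℕ) :
    a ((M.faceStep)^[j] f) = a f + j * (colInc I 0 + colInc I 1) := by
  induction j with
  | zero => simp
  | succ j ih =>
    rw [Function.iterate_succ_apply', CMap.faceStep, ha, ha, ih]
    push_cast
    ring

/-- A coloring defined off `F` forces cycles avoiding `F` to be consistent. -/
theorem color_word {Ω : Type} (M : CMap Ω) (F : Set Ω) {I : Set (Fin 3)} {a : Ω → ZMod 2}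
    (ha : ∀ g j, g ∉ F → M.r j g ∉ F → a (M.r j g) = a g + colInc I j)
    (W : List (Fin 3)) : ∀ f : Ω, (∀ g ∈ M.visits f W, g ∉ F) →
    a (M.applyWord W f) = a f + (W.map (colInc I)).sum := by
  induction W with
  | nil => intro f _; simp [CMap.applyWord]
  | cons i W ih =>
    intro f hv
    have hf : f ∉ F := hv f ⟨[], List.nil_prefix, rfl⟩
    have hif : M.r i f ∉ F := hv _ ⟨[i], by simp, rfl⟩
    have h := ih (M.r i f) (by
      rintro g ⟨W', hW', rfl⟩
      exact hv _ ⟨i :: W', by simpa using hW', rfl⟩)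
    change a (M.applyWord W (M.r i f)) = _
    rw [h, ha f i hf hif, List.map_cons, List.sum_cons, add_assoc]

theorem consistent_iff_sum (I : Set (Fin 3)) (W : List (Fin 3)) :
    Consistent I W ↔ (W.map (colInc I)).sum = 0 := by
  classical
  have h : (W.map (colInc I)).sum = ((W.countP fun i => decide (i ∈ I) : ℕ) : ZMod 2) := by
    induction W with
    | nil => simp
    | cons i W ih =>
      rw [List.map_cons, List.sum_cons, ih, List.countP_cons]
      by_cases hi : i ∈ I <;> simp [colInc, hi, add_comm]
  rw [h, ZMod.natCast_eq_zero_iff_even, Consistent]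

theorem consistent_of_partial {Ω : Type} (M : CMap Ω) (F : Set Ω) {I : Set (Fin 3)}
    {a : Ω → ZMod 2}
    (ha : ∀ g j, g ∉ F → M.r j g ∉ F → a (M.r j g) = a g + colInc I j)
    {f : Ω} {W : List (Fin 3)} (hc : M.IsCycle f W) (hv : ∀ g ∈ M.visits f W, g ∉ F) :
    Consistent I W := by
  rw [consistent_iff_sum]
  have h := color_word M F ha W f hv
  rw [hc] at h
  exact left_eq_add.mp h

/-- if the connected sum `M ⊕ N` exists (formalized as a map `P` on
`(Ω ∖ F_M) ∪ (Ω' ∖ F_N)` whose connections are as prescribed), and if for every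
`I ∉ T M` there is an `I`-inconsistent cycle of `M` avoiding the face `F_M`,
and likewise for `N`, then `T (M ⊕ N) = T M ∩ T N`. -/
theorem connSum_T_eq_inter {Ω Ω' : Type} (M : CMap Ω) (N : CMap Ω') (fM : Ω) (fN : Ω')
    (hM2 : ∀ g ∈ M.faceOf fM, M.r 2 g ∉ M.faceOf fM)
    (hN2 : ∀ g ∈ N.faceOf fN, N.r 2 g ∉ N.faceOf fN)
    (hMfin : (M.faceOf fM).Finite) (hNfin : (N.faceOf fN).Finite)
    (hcard : (M.faceOf fM).ncard = (N.faceOf fN).ncard)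
    (P : CMap ↥(connSumFlags M N fM fN))
    (h0 : ∀ x : ↥(connSumFlags M N fM fN),
      (P.r 0 x).1 = Sum.map (M.r 0) (N.r 0) x.1)
    (h1 : ∀ x : ↥(connSumFlags M N fM fN),
      (P.r 1 x).1 = Sum.map (M.r 1) (N.r 1) x.1)
    (h2a : ∀ (x : ↥(connSumFlags M N fM fN)) (g : Ω), x.1 = Sum.inl g →
      M.r 2 g ∉ M.faceOf fM → (P.r 2 x).1 = Sum.inl (M.r 2 g))
    (h2b : ∀ (x : ↥(connSumFlags M N fM fN)) (g : Ω'), x.1 = Sum.inr g →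
      N.r 2 g ∉ N.faceOf fN → (P.r 2 x).1 = Sum.inr (N.r 2 g))
    (h2c : ∀ (j : ℕ) (x : ↥(connSumFlags M N fM fN)),
      x.1 = Sum.inl (M.r 2 ((M.faceStep)^[j] fM)) →
      (P.r 2 x).1 = Sum.inr (N.r 2 ((N.faceStep)^[j] fN)))
    (h2d : ∀ (j : ℕ) (x : ↥(connSumFlags M N fM fN)),
      x.1 = Sum.inl (M.r 2 ((M.faceStep)^[j] (M.r 1 fM))) →
      (P.r 2 x).1 = Sum.inr (N.r 2 ((N.faceStep)^[j] (N.r 1 fN))))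
    (hMcyc : ∀ I : Set (Fin 3), I ∉ M.T → ∃ (f : Ω) (W : List (Fin 3)),
      M.IsCycle f W ∧ ¬Consistent I W ∧ ∀ g ∈ M.visits f W, g ∉ M.faceOf fM)
    (hNcyc : ∀ I : Set (Fin 3), I ∉ N.T → ∃ (f : Ω') (W : List (Fin 3)),
      N.IsCycle f W ∧ ¬Consistent I W ∧ ∀ g ∈ N.visits f W, g ∉ N.faceOf fN) :
    P.T = M.T ∩ N.T := by
  ext I
  constructor
  · rintro ⟨c, hc⟩
    rw [isColoring_iff_colInc] at hc
    classical
    constructor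
    · by_contra hI
      obtain ⟨f, W, hcyc, hinc, hv⟩ := hMcyc I hI
      refine hinc (consistent_of_partial M (M.faceOf fM)
        (a := fun g => if h : g ∉ M.faceOf fM then c ⟨Sum.inl g, h⟩ else 0) ?_ hcyc hv)
      intro g j hg hjg
      simp only [dif_pos hg, dif_pos hjg]
      rw [← hc]
      congr 1
      apply Subtype.ext
      fin_cases j
      · exact (h0 ⟨Sum.inl g, hg⟩).symm
      · exact (h1 ⟨Sum.inl g, hg⟩).symm
      · exact (h2a _ g rfl hjg).symm
    · by_contra hI
      obtain ⟨f, W, hcyc, hinc, hv⟩ := hNcyc I hI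
      refine hinc (consistent_of_partial N (N.faceOf fN)
        (a := fun g => if h : g ∉ N.faceOf fN then c ⟨Sum.inr g, h⟩ else 0) ?_ hcyc hv)
      intro g j hg hjg
      simp only [dif_pos hg, dif_pos hjg]
      rw [← hc]
      congr 1
      apply Subtype.ext
      fin_cases j
      · exact (h0 ⟨Sum.inr g, hg⟩).symm
      · exact (h1 ⟨Sum.inr g, hg⟩).symm
      · exact (h2b _ g rfl hjg).symm
  · rintro ⟨⟨a, ha⟩, ⟨b', hb'⟩⟩
    rw [isColoring_iff_colInc] at ha hb'
    obtain ⟨b, hb, hab⟩ : ∃ b : Ω' → ZMod 2, (∀ f j, b (N.r j f) = b f + colInc I j) ∧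
        b fN = a fM + colInc I 2 := by
      refine ⟨fun g => b' g + (a fM + colInc I 2 - b' fN), ?_, by ring⟩
      intro f j
      simp only [hb']
      ring
    have two : ∀ x : ZMod 2, x + x = 0 := CharTwo.add_self_eq_zero
    have e1 : ∀ j : ℕ, b ((N.faceStep)^[j] fN) = a ((M.faceStep)^[j] fM) + colInc I 2 := by
      intro j
      rw [color_step_iter N hb, color_step_iter M ha, hab]
      ring
    have e2 : ∀ j : ℕ, b ((N.faceStep)^[j] (N.r 1 fN)) =
        a ((M.faceStep)^[j] (M.r 1 fM)) + colInc I 2 := by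
      intro j
      rw [color_step_iter N hb, color_step_iter M ha, hb, ha, hab]
      ring
    refine ⟨fun x => Sum.elim a b x.1, ?_⟩
    rw [isColoring_iff_colInc]
    have hl : ∀ (x : ↥(connSumFlags M N fM fN)) (g : Ω), g ∈ M.faceOf fM →
        x.1 = Sum.inl (M.r 2 g) → Sum.elim a b (P.r 2 x).1 = Sum.elim a b x.1 + colInc I 2 := by
      intro x g hg hx
      obtain ⟨j, rfl | rfl⟩ := face_form M hMfin g hg
      · rw [h2c j x hx, hx, Sum.elim_inl, Sum.elim_inr, hb, ha, e1]
      · rw [h2d j x hx, hx, Sum.elim_inl, Sum.elim_inr, hb, ha, e2]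
    have hr : ∀ (x : ↥(connSumFlags M N fM fN)) (g : Ω'), g ∈ N.faceOf fN →
        x.1 = Sum.inr (N.r 2 g) → ∃ g' ∈ M.faceOf fM, ∃ y : ↥(connSumFlags M N fM fN),
          y.1 = Sum.inl (M.r 2 g') ∧ P.r 2 y = x := by
      intro x g hg hx
      obtain ⟨j, rfl | rfl⟩ := face_form N hNfin g hg
      · have hf := face_step_iter M (face_self M fM) j
        exact ⟨_, hf, ⟨Sum.inl (M.r 2 ((M.faceStep)^[j] fM)), hM2 _ hf⟩, rfl,
          Subtype.ext ((h2c j _ rfl).trans hx.symm)⟩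
      · have hf := face_step_iter M (face_r1 M (face_self M fM)) j
        exact ⟨_, hf, ⟨Sum.inl (M.r 2 ((M.faceStep)^[j] (M.r 1 fM))), hM2 _ hf⟩, rfl,
          Subtype.ext ((h2d j _ rfl).trans hx.symm)⟩
    intro x j
    have hj : j = 0 ∨ j = 1 ∨ j = 2 := by fin_cases j <;> simp
    rcases hj with rfl | rfl | rfl
    · simp only [h0]
      rcases x.1 with g | g
      · exact ha g 0
      · exact hb g 0
    · simp only [h1]
      rcases x.1 with g | g
      · exact ha g 1
      · exact hb g 1
    · rcases hx : x.1 with g | g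
      · by_cases hg : M.r 2 g ∈ M.faceOf fM
        · have h := hl x _ hg (by rw [hx, M.invol])
          rwa [hx] at h
        · simp only [h2a x g hx hg]
          exact ha g 2
      · by_cases hg : N.r 2 g ∈ N.faceOf fN
        · obtain ⟨g', hg', y, hy, rfl⟩ := hr x _ hg (by rw [hx, N.invol])
          have h := hl y g' hg' hy
          rw [hx] at h
          rw [h, P.invol, add_assoc, two, add_zero]
        · simp only [h2b x g hx hg]
          exact hb g 2
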